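/- arXiv:1205.5875 — 3 statements merged into one kernel-verified Lean document; each statement's English description precedes it below -/
import Mathlib

section
/- Let H be a real Hilbert space and A : H → H a bounded linear monotone operator, i.e. ⟨Ax, x⟩ ≥ 0 for all x ∈ H. For λ > 0 let J_λ : H → H be the bounded linear operator with J_λ(x + λAx) = x and J_λ x + λA(J_λ x) = x for all x ∈ H (i.e. J_λ = (I + λA)⁻¹), and set A_λ := λ⁻¹(I − J_λ). Let λ, μ > 0, T > 0, let g : [0,T] → H be continuous, and let u, v : [0,T] → H be differentiable functions with u(0) = v(0) such that u′(t) = g(t) − A_λ u(t) and v′(t) = g(t) − A_μ v(t) for every t ∈ [0,T]. Then for every t ∈ [0,T]: ‖u(t) − v(t)‖² ≤ 4(λ + μ) ∫₀ᵗ ( ‖A_λ u(s)‖² + ‖A_μ v(s)‖² ) ds. -/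
open MeasureTheory Filter NormedSpace intervalIntegral
open scoped RealInnerProductSpace

/-- Two-parameter monotonicity defect of the Yosida approximations of a monotone linear operator:
if `x = p + lam • A p` and `y = q + mu • A q`, then `⟪x - y, A p - A q⟫` is bounded below. -/
theorem neg_two_mul_inner_sub_le_of_monotone
    {H : Type*} [NormedAddCommGroup H] [InnerProductSpace ℝ H] (A : H →L[ℝ] H)
    (hA : ∀ x : H, 0 ≤ ⟪A x, x⟫) {lam mu : ℝ} (hlam : 0 ≤ lam) (hmu : 0 ≤ mu) (p q : H) :
    -(2 * ⟪(p + lam • A p) - (q + mu • A q), A p - A q⟫) ≤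
      (lam + mu) * (‖A p‖ ^ 2 + ‖A q‖ ^ 2) := by
  have hpq : 0 ≤ ⟪p - q, A p - A q⟫ := by
    simpa only [map_sub, real_inner_comm] using hA (p - q)
  have hsplit : ⟪(p + lam • A p) - (q + mu • A q), A p - A q⟫ =
      ⟪p - q, A p - A q⟫ + (lam * ‖A p‖ ^ 2 + mu * ‖A q‖ ^ 2 - (lam + mu) * ⟪A p, A q⟫) := by
    simp only [inner_sub_left, inner_sub_right, inner_add_left, real_inner_smul_left,
      real_inner_self_eq_norm_sq, real_inner_comm (A p) (A q)]
    ring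
  have hcs : 2 * ⟪A p, A q⟫ ≤ ‖A p‖ ^ 2 + ‖A q‖ ^ 2 := by
    nlinarith [real_inner_le_norm (A p) (A q), sq_nonneg (‖A p‖ - ‖A q‖)]
  have hmul := mul_le_mul_of_nonneg_left hcs (add_nonneg hlam hmu)
  have hp := mul_nonneg hlam (sq_nonneg ‖A p‖)
  have hq := mul_nonneg hmu (sq_nonneg ‖A q‖)
  rw [hsplit]
  linarith

/-- The Yosida approximation `lam⁻¹ • (I - J)` is `A ∘ J`. -/
theorem inv_smul_sub_resolvent {H : Type*} [NormedAddCommGroup H] [NormedSpace ℝ H]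
    (A J : H →L[ℝ] H) {lam : ℝ} (hlam : lam ≠ 0) (hJ : ∀ x : H, J x + lam • A (J x) = x) (x : H) :
    lam⁻¹ • (x - J x) = A (J x) := by
  rw [inv_smul_eq_iff₀ hlam, sub_eq_iff_eq_add', hJ]

/-- **Key deterministic estimate for Yosida-regularized equations.**
Let `A` be a bounded linear monotone operator on a real Hilbert space `H`,
`λ, μ > 0`, and let `J_λ`, `J_μ` be the resolvents with Yosida approximations
`A_λ = λ⁻¹(I - J_λ)`, `A_μ = μ⁻¹(I - J_μ)`. If `g : [0,T] → H` is continuous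
and `u, v : [0,T] → H` are differentiable with `u(0) = v(0)`,
`u' = g - A_λ u` and `v' = g - A_μ v` on `[0,T]`, then for every `t ∈ [0,T]`:
`‖u(t) - v(t)‖² ≤ 4 (λ + μ) ∫₀ᵗ (‖A_λ u(s)‖² + ‖A_μ v(s)‖²) ds`. -/
theorem yosida_two_parameter_estimate
    {H : Type*} [NormedAddCommGroup H] [InnerProductSpace ℝ H] [CompleteSpace H]
    (A : H →L[ℝ] H)
    (hA : ∀ x : H, 0 ≤ ⟪A x, x⟫)
    (lam mu : ℝ) (hlam : 0 < lam) (hmu : 0 < mu)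
    (Jl Jm : H →L[ℝ] H)
    (hJl₁ : ∀ x : H, Jl (x + lam • A x) = x)
    (hJl₂ : ∀ x : H, Jl x + lam • A (Jl x) = x)
    (hJm₁ : ∀ x : H, Jm (x + mu • A x) = x)
    (hJm₂ : ∀ x : H, Jm x + mu • A (Jm x) = x)
    (T : ℝ) (hT : 0 < T)
    (g : ℝ → H) (hg : ContinuousOn g (Set.Icc 0 T))
    (u v : ℝ → H)
    (huv0 : u 0 = v 0)
    (hu : ∀ t ∈ Set.Icc (0:ℝ) T,
      HasDerivWithinAt u (g t - lam⁻¹ • (u t - Jl (u t))) (Set.Icc 0 T) t)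
    (hv : ∀ t ∈ Set.Icc (0:ℝ) T,
      HasDerivWithinAt v (g t - mu⁻¹ • (v t - Jm (v t))) (Set.Icc 0 T) t)
    (t : ℝ) (ht : t ∈ Set.Icc (0:ℝ) T) :
    ‖u t - v t‖ ^ 2 ≤ 4 * (lam + mu) *
      ∫ s in (0:ℝ)..t,
        (‖lam⁻¹ • (u s - Jl (u s))‖ ^ 2 + ‖mu⁻¹ • (v s - Jm (v s))‖ ^ 2) := by
  have hYl := inv_smul_sub_resolvent A Jl hlam.ne' hJl₂
  have hYm := inv_smul_sub_resolvent A Jm hmu.ne' hJm₂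
  simp only [hYl, hYm] at hu hv ⊢
  have hsub : Set.Icc 0 t ⊆ Set.Icc 0 T := Set.Icc_subset_Icc_right ht.2
  have huc : ContinuousOn u (Set.Icc 0 t) :=
    fun s hs => ((hu s (hsub hs)).continuousWithinAt).mono hsub
  have hvc : ContinuousOn v (Set.Icc 0 t) :=
    fun s hs => ((hv s (hsub hs)).continuousWithinAt).mono hsub
  have hφ : ContinuousOn
      (fun s => 4 * (lam + mu) * (‖A (Jl (u s))‖ ^ 2 + ‖A (Jm (v s))‖ ^ 2)) (Set.Icc 0 t) := by
    fun_prop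
  have key := sub_le_integral_of_hasDeriv_right_of_le ht.1
    (g := fun s => ‖u s - v s‖ ^ 2)
    (g' := fun s => 2 * ⟪u s - v s, (g s - A (Jl (u s))) - (g s - A (Jm (v s)))⟫)
    (by fun_prop)
    (fun s hs => by
      have hsT : s ∈ Set.Icc 0 T := hsub (Set.Ioo_subset_Icc_self hs)
      have hnhds : Set.Icc 0 T ∈ nhds s := Icc_mem_nhds hs.1 (hs.2.trans_le ht.2)
      exact (((hu s hsT).sub (hv s hsT)).norm_sq.hasDerivAt hnhds).hasDerivWithinAt)
    hφ.integrableOn_Icc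
    (fun s _ => by
      have h := neg_two_mul_inner_sub_le_of_monotone A hA hlam.le hmu.le (Jl (u s)) (Jm (v s))
      rw [hJl₂, hJm₂] at h
      have hneg : (g s - A (Jl (u s))) - (g s - A (Jm (v s))) =
          -(A (Jl (u s)) - A (Jm (v s))) := by abel
      have hnonneg : 0 ≤ (lam + mu) * (‖A (Jl (u s))‖ ^ 2 + ‖A (Jm (v s))‖ ^ 2) := by positivity
      rw [hneg, inner_neg_right]
      linarith)
  simpa [huv0] using key
end

section
/- Let H be a real Hilbert space, T > 0, and let A, B : H → H be bounded linear operators with B monotone, i.e. ⟨Bx, x⟩ ≥ 0 for all x ∈ H. Let g : [0,T] → H be continuous and let u, v : [0,T] → H be differentiable with u(0) = v(0), u′(t) = g(t) − A u(t) and v′(t) = g(t) − B v(t) for every t ∈ [0,T]. Then for every t ∈ [0,T]: ‖u(t) − v(t)‖² ≤ e^T ∫₀ᵗ ‖A u(s) − B u(s)‖² ds. -/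
open MeasureTheory Filter NormedSpace intervalIntegral
open scoped RealInnerProductSpace

/-- A Grönwall inequality with an integrable source: if `φ' ≤ φ + ψ` on `[0, T)`, `φ 0 ≤ 0` and
`ψ ≥ 0` is continuous, then `φ t ≤ exp t * ∫ s in 0..t, ψ s`. -/
theorem le_exp_mul_integral_of_deriv_right_le {T : ℝ} {φ φ' ψ : ℝ → ℝ}
    (hφ : ContinuousOn φ (Set.Icc 0 T))
    (hφ' : ∀ s ∈ Set.Ico 0 T, HasDerivWithinAt φ (φ' s) (Set.Ici s) s)
    (hψ : ContinuousOn ψ (Set.Icc 0 T)) (hψ_nonneg : ∀ s, 0 ≤ ψ s) (hφ0 : φ 0 ≤ 0)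
    (bound : ∀ s ∈ Set.Ico 0 T, φ' s ≤ φ s + ψ s) {t : ℝ} (ht : t ∈ Set.Icc 0 T) :
    φ t ≤ Real.exp t * ∫ s in (0:ℝ)..t, ψ s := by
  have hT : 0 ≤ T := ht.1.trans ht.2
  have hψ_int : IntervalIntegrable ψ volume 0 T := hψ.intervalIntegrable_of_Icc hT
  have hexp (s : ℝ) : HasDerivAt (fun r => Real.exp (-r)) (-Real.exp (-s)) s := by
    simpa using (hasDerivAt_neg s).exp
  have key : Real.exp (-t) * φ t ≤ ∫ s in (0:ℝ)..t, ψ s := by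
    refine image_le_of_deriv_right_le_deriv_boundary
      (f := fun s => Real.exp (-s) * φ s) (B := fun s => ∫ r in (0:ℝ)..s, ψ r) (B' := ψ)
      (by fun_prop) (fun s hs => (hexp s).hasDerivWithinAt.mul (hφ' s hs)) (by simpa using hφ0)
      ?_ ?_ ?_ ht
    · simpa [Set.uIcc_of_le hT] using
        continuousOn_primitive_interval' hψ_int Set.left_mem_uIcc
    · intro s hs
      have hs' : s ∈ Set.Icc 0 T := Set.Ico_subset_Icc_self hs
      have hle : nhdsWithin s (Set.Ioi s) ≤ nhdsWithin s (Set.Icc 0 T) :=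
        nhdsWithin_le_of_mem (Icc_mem_nhdsGT_of_mem hs)
      refine integral_hasDerivWithinAt_right (t := Set.Ioi s)
        ((hψ.mono (Set.Icc_subset_Icc_right hs'.2)).intervalIntegrable_of_Icc hs'.1) ?_
        ((hψ s hs').mono_left hle)
      obtain ⟨U, hU, hm⟩ := hψ.stronglyMeasurableAtFilter_nhdsWithin measurableSet_Icc s
      exact ⟨U, hle hU, hm⟩
    · intro s hs
      have h1 : Real.exp (-s) ≤ 1 := Real.exp_le_one_iff.mpr (neg_nonpos.mpr hs.1)
      calc -Real.exp (-s) * φ s + Real.exp (-s) * φ' s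
          = Real.exp (-s) * (φ' s - φ s) := by ring
        _ ≤ Real.exp (-s) * ψ s := by gcongr; linarith [bound s hs]
        _ ≤ ψ s := mul_le_of_le_one_left (hψ_nonneg s) h1
  calc φ t = Real.exp t * (Real.exp (-t) * φ t) := by
        rw [← mul_assoc, ← Real.exp_add]; simp
    _ ≤ _ := by gcongr

/-- **Deterministic comparison estimate for two generators.**
Let `A, B` be bounded linear operators on a real Hilbert space `H` with `B`
monotone (`⟪B x, x⟫ ≥ 0`). If `g : [0,T] → H` is continuous and
`u, v : [0,T] → H` are differentiable with `u(0) = v(0)`, `u' = g - A u` and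
`v' = g - B v` on `[0,T]`, then for every `t ∈ [0,T]`:
`‖u(t) - v(t)‖² ≤ e^T ∫₀ᵗ ‖A u(s) - B u(s)‖² ds`. -/
theorem comparison_estimate_two_generators
    {H : Type*} [NormedAddCommGroup H] [InnerProductSpace ℝ H] [CompleteSpace H]
    (T : ℝ) (hT : 0 < T)
    (A B : H →L[ℝ] H)
    (hB : ∀ x : H, 0 ≤ ⟪B x, x⟫)
    (g : ℝ → H) (hg : ContinuousOn g (Set.Icc 0 T))
    (u v : ℝ → H)
    (huv0 : u 0 = v 0)
    (hu : ∀ t ∈ Set.Icc (0:ℝ) T,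
      HasDerivWithinAt u (g t - A (u t)) (Set.Icc 0 T) t)
    (hv : ∀ t ∈ Set.Icc (0:ℝ) T,
      HasDerivWithinAt v (g t - B (v t)) (Set.Icc 0 T) t)
    (t : ℝ) (ht : t ∈ Set.Icc (0:ℝ) T) :
    ‖u t - v t‖ ^ 2 ≤ Real.exp T * ∫ s in (0:ℝ)..t, ‖A (u s) - B (u s)‖ ^ 2 := by
  have hw (s : ℝ) (hs : s ∈ Set.Icc 0 T) :
      HasDerivWithinAt (fun r => ‖u r - v r‖ ^ 2)
        (2 * ⟪u s - v s, (g s - A (u s)) - (g s - B (v s))⟫) (Set.Icc 0 T) s :=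
    ((hu s hs).sub (hv s hs)).norm_sq
  have hu_cont : ContinuousOn u (Set.Icc 0 T) := fun s hs => (hu s hs).continuousWithinAt
  have hψ_nonneg (s : ℝ) : 0 ≤ ‖A (u s) - B (u s)‖ ^ 2 := by positivity
  have gronwall : ‖u t - v t‖ ^ 2 ≤ Real.exp t * ∫ s in (0:ℝ)..t, ‖A (u s) - B (u s)‖ ^ 2 := by
    refine le_exp_mul_integral_of_deriv_right_le (φ := fun s => ‖u s - v s‖ ^ 2)
      (fun s hs => (hw s hs).continuousWithinAt)
      (fun s hs => (hw s (Set.Ico_subset_Icc_self hs)).mono_of_mem_nhdsWithin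
        (Icc_mem_nhdsGE_of_mem hs))
      (by fun_prop) hψ_nonneg (by simp [huv0]) (fun s _ => ?_) ht
    have hsplit : (g s - A (u s)) - (g s - B (v s))
        = -(A (u s) - B (u s)) - B (u s - v s) := by
      rw [map_sub]; abel
    have hmono := hB (u s - v s)
    have hCS := real_inner_le_norm (u s - v s) (-(A (u s) - B (u s)))
    rw [norm_neg] at hCS
    rw [hsplit, inner_sub_right, real_inner_comm (B (u s - v s))]
    nlinarith [sq_nonneg (‖u s - v s‖ - ‖A (u s) - B (u s)‖)]
  refine gronwall.trans ?_
  gcongr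
  · exact integral_nonneg ht.1 fun s _ => hψ_nonneg s
  · exact ht.2
end

section
/- Let H be a real Hilbert space, T > 0 and p ∈ [2, ∞). Then there exists a constant N > 0, depending only on T and p, with the following property: for all bounded linear operators A, B : H → H with B monotone (⟨Bx, x⟩ ≥ 0 for all x ∈ H), every continuous g : [0,T] → H, and all differentiable u, v : [0,T] → H with u(0) = v(0), u′(t) = g(t) − A u(t) and v′(t) = g(t) − B v(t) for every t ∈ [0,T], one has for every t ∈ [0,T]: ‖u(t) − v(t)‖^p ≤ N ∫₀ᵗ ‖A u(s) − B u(s)‖^p ds. -/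
open MeasureTheory Filter NormedSpace intervalIntegral
open scoped RealInnerProductSpace

/-- Young's inequality in the form `p a^(p-1) b ≤ (p-1) a^p + b^p`. -/
theorem mul_rpow_sub_one_mul_le {a b p : ℝ} (ha : 0 ≤ a) (hb : 0 ≤ b) (hp : 1 < p) :
    p * (a ^ (p - 1) * b) ≤ (p - 1) * a ^ p + b ^ p := by
  have hp0 : 0 < p := by linarith
  have hp1 : 0 < p - 1 := by linarith
  have hconj := (Real.HolderConjugate.conjExponent hp).symm
  have h := Real.young_inequality_of_nonneg (Real.rpow_nonneg ha (p - 1)) hb hconj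
  rw [Real.conjExponent, ← Real.rpow_mul ha, mul_div_cancel₀ p hp1.ne'] at h
  calc p * (a ^ (p - 1) * b) ≤ p * (a ^ p / (p / (p - 1)) + b ^ p / p) := by gcongr
    _ = (p - 1) * a ^ p + b ^ p := by field_simp

/-- If `⟪w, w'⟫ ≤ ‖w‖ f` with `w a = 0`, then `‖w‖^p` is controlled by the integral of `f^p`. -/
theorem norm_rpow_le_exp_mul_integral
    {H : Type*} [NormedAddCommGroup H] [InnerProductSpace ℝ H]
    {a b p : ℝ} (hab : a ≤ b) (hp : 2 ≤ p) {w w' : ℝ → H} {f : ℝ → ℝ}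
    (hw : ContinuousOn w (Set.Icc a b)) (hwa : w a = 0)
    (hw' : ∀ s ∈ Set.Ioo a b, HasDerivAt w (w' s) s)
    (hf : ContinuousOn f (Set.Icc a b)) (hf0 : ∀ s ∈ Set.Ioo a b, 0 ≤ f s)
    (hle : ∀ s ∈ Set.Ioo a b, ⟪w s, w' s⟫ ≤ ‖w s‖ * f s) :
    ‖w b‖ ^ p ≤ Real.exp ((p - 1) * (b - a)) * ∫ s in a..b, f s ^ p := by
  have hpow (x : ℝ) (hx : 0 ≤ x) (r : ℝ) : (x ^ 2) ^ r = x ^ (2 * r) := by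
    rw [← Real.rpow_natCast, ← Real.rpow_mul hx]
    norm_num
  have hfp : ContinuousOn (fun s => f s ^ p) (Set.Icc a b) :=
    hf.rpow_const fun _ _ => Or.inr (by linarith)
  have key := sub_le_integral_of_hasDeriv_right_of_le
    (g := fun s => Real.exp (-((p - 1) * (s - a))) * (‖w s‖ ^ 2) ^ (p / 2))
    (g' := fun s => Real.exp (-((p - 1) * (s - a))) * (-(p - 1)) * (‖w s‖ ^ 2) ^ (p / 2) +
      Real.exp (-((p - 1) * (s - a))) *
        (2 * ⟪w s, w' s⟫ * (p / 2) * (‖w s‖ ^ 2) ^ (p / 2 - 1)))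
    (φ := fun s => f s ^ p) hab ?_ ?_ hfp.integrableOn_Icc ?_
  · have h0 : (0 : ℝ) ^ p = 0 := Real.zero_rpow (by linarith)
    simp only [hpow _ (norm_nonneg _), mul_div_cancel₀ p (two_ne_zero' ℝ)] at key
    rw [hwa, norm_zero, h0, mul_zero, sub_zero] at key
    calc ‖w b‖ ^ p = Real.exp ((p - 1) * (b - a)) *
          (Real.exp (-((p - 1) * (b - a))) * ‖w b‖ ^ p) := by
          rw [← mul_assoc, ← Real.exp_add]
          simp
      _ ≤ _ := by gcongr
  · refine ContinuousOn.mul (by fun_prop) ?_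
    exact (hw.norm.pow 2).rpow_const fun _ _ => Or.inr (by linarith)
  · intro s hs
    have h1 : HasDerivAt (fun s => -((p - 1) * (s - a))) (-(p - 1)) s := by
      have h := (((hasDerivAt_id' s).sub_const a).const_mul (p - 1)).fun_neg
      rwa [mul_one] at h
    exact (h1.exp.mul ((hw' s hs).norm_sq.rpow_const
      (Or.inr (by linarith)))).hasDerivWithinAt
  · intro s hs
    have hexp : Real.exp (-((p - 1) * (s - a))) ≤ 1 := by
      rw [Real.exp_le_one_iff, neg_nonpos]
      exact mul_nonneg (by linarith) (by linarith [hs.1])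
    have hn := norm_nonneg (w s)
    have hfs := hf0 s hs
    have hyoung := mul_rpow_sub_one_mul_le hn hfs (p := p) (by linarith)
    have hsplit : ‖w s‖ ^ (p - 1) = ‖w s‖ ^ (p - 2) * ‖w s‖ := by
      rw [← Real.rpow_add_one' hn (by linarith)]
      ring_nf
    have hinner := mul_le_mul_of_nonneg_left (hle s hs)
      (mul_nonneg (by linarith : 0 ≤ p) (Real.rpow_nonneg hn (p - 2)))
    simp only [hpow _ hn, mul_div_cancel₀ p (two_ne_zero' ℝ),
      show 2 * (p / 2 - 1) = p - 2 by ring]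
    calc _ = Real.exp (-((p - 1) * (s - a))) *
          (p * ‖w s‖ ^ (p - 2) * ⟪w s, w' s⟫ - (p - 1) * ‖w s‖ ^ p) := by ring
      _ ≤ Real.exp (-((p - 1) * (s - a))) * f s ^ p := by
          gcongr
          rw [hsplit] at hyoung
          linarith
      _ ≤ f s ^ p := mul_le_of_le_one_left (Real.rpow_nonneg hfs p) hexp

/-- **`L^p` deterministic comparison estimate for two generators.**
Let `H` be a real Hilbert space, `T > 0` and `p ∈ [2, ∞)`. There is a constant
`N > 0` (depending only on `T` and `p`) such that for all bounded linear
operators `A, B` on `H` with `B` monotone, every continuous `g : [0,T] → H`,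
and all differentiable `u, v : [0,T] → H` with `u(0) = v(0)`, `u' = g - A u`
and `v' = g - B v` on `[0,T]`, one has for every `t ∈ [0,T]`:
`‖u(t) - v(t)‖^p ≤ N ∫₀ᵗ ‖A u(s) - B u(s)‖^p ds`. -/
theorem comparison_estimate_two_generators_pow
    {H : Type*} [NormedAddCommGroup H] [InnerProductSpace ℝ H] [CompleteSpace H]
    (T : ℝ) (hT : 0 < T)
    (p : ℝ) (hp : 2 ≤ p) :
    ∃ N : ℝ, 0 < N ∧
      ∀ (A B : H →L[ℝ] H), (∀ x : H, 0 ≤ ⟪B x, x⟫) →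
      ∀ (g : ℝ → H), ContinuousOn g (Set.Icc 0 T) →
      ∀ (u v : ℝ → H), u 0 = v 0 →
        (∀ t ∈ Set.Icc (0:ℝ) T,
          HasDerivWithinAt u (g t - A (u t)) (Set.Icc 0 T) t) →
        (∀ t ∈ Set.Icc (0:ℝ) T,
          HasDerivWithinAt v (g t - B (v t)) (Set.Icc 0 T) t) →
      ∀ t ∈ Set.Icc (0:ℝ) T,
        ‖u t - v t‖ ^ p ≤ N * ∫ s in (0:ℝ)..t, ‖A (u s) - B (u s)‖ ^ p := by
  refine ⟨Real.exp ((p - 1) * T), Real.exp_pos _, ?_⟩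
  intro A B hB g _ u v huv hu hv t ht
  have hsub : Set.Icc 0 t ⊆ Set.Icc 0 T := Set.Icc_subset_Icc_right ht.2
  have huc : ContinuousOn u (Set.Icc 0 t) :=
    fun s hs => (hu s (hsub hs)).continuousWithinAt.mono hsub
  have hvc : ContinuousOn v (Set.Icc 0 t) :=
    fun s hs => (hv s (hsub hs)).continuousWithinAt.mono hsub
  have h := norm_rpow_le_exp_mul_integral ht.1 hp (w := fun s => u s - v s)
    (w' := fun s => (g s - A (u s)) - (g s - B (v s))) (f := fun s => ‖A (u s) - B (u s)‖)
    (huc.sub hvc) (sub_eq_zero.2 huv) ?_ (by fun_prop) (fun _ _ => norm_nonneg _) ?_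
  · refine h.trans ?_
    have hp1 : 0 ≤ p - 1 := by linarith
    have hint : 0 ≤ ∫ s in (0:ℝ)..t, ‖A (u s) - B (u s)‖ ^ p :=
      integral_nonneg ht.1 fun _ _ => by positivity
    gcongr
    linarith [ht.2]
  · intro s hs
    have hsT : s ∈ Set.Icc 0 T := hsub (Set.Ioo_subset_Icc_self hs)
    have hnhds : Set.Icc 0 T ∈ nhds s := Icc_mem_nhds hs.1 (hs.2.trans_le ht.2)
    exact ((hu s hsT).hasDerivAt hnhds).sub ((hv s hsT).hasDerivAt hnhds)
  · intro s _
    have hdecomp : (g s - A (u s)) - (g s - B (v s)) =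
        -(A (u s) - B (u s)) - B (u s - v s) := by
      rw [map_sub]
      abel
    have hmono := hB (u s - v s)
    rw [real_inner_comm] at hmono
    have hcs := real_inner_le_norm (u s - v s) (-(A (u s) - B (u s)))
    rw [norm_neg] at hcs
    simp only [hdecomp]
    rw [inner_sub_right]
    linarith
end
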